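/- (Covariant Hamilton equations, general case.) Let X^i_α : ℝ^p × ℝ^n → ℝ be smooth, with F_j{}^i{}_α = ∇_j X^i_α − g_{hj} g^{ik} ∇_k X^h_α and ω_{jhα} = ½ g_{kh} F_j{}^k{}_α. A smooth map x : ℝ^p → ℝ^n satisfies the generalized Poisson system h^{αβ} x^i_{αβ} = g^{ih} h^{αβ} g_{kj} (∇_h X^k_α) X^j_β + h^{αβ} F_j{}^i{}_α x^j_β + h^{αβ} D_β X^i_α (all quantities depending on (t,x) evaluated at (t, x(t))) if and only if there exist smooth functions u^{αi} : ℝ^p → ℝ satisfying the covariant Hamilton PDEs system: u^{αi} = h^{αβ} x^i_β and ∂u^{αi}/∂t^α + H^α_{αλ} u^{λi} + G^i_{jk} u^{αj} ∂x^k/∂t^α = g^{ih} h^{αβ} g_{jk} X^j_β ∇_h X^k_α + 2 g^{hi} ω_{jhα} u^{αj} + h^{αβ} D_β X^i_α. -/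

import Mathlib

/-!
The momenta are forced, `u^{αi} = h^{αβ} x^i_β`, and they are as smooth as `h` and the first jet of
`x` because matrix inversion is smooth. The point is that their covariant divergence is the
`h`-trace of the covariant Hessian of `x`: the Levi-Civita connection of `h` is compatible with the
inverse metric, `∂_γ h^{αβ} = - H^α_{γλ} h^{λβ} - h^{αλ} H^β_{γλ}`, and for `γ = α` the first term
is the one which the divergence corrects for, while the second is the Christoffel term of the
Hessian. The gyroscopic forces agree because raising the index that was lowered in `ω` gives back
`F`.
-/

open scoped BigOperators

noncomputable section

/-- Partial derivative of `f : ℝ^m → ℝ` at `t` in the `α`-th coordinate direction. -/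
def pd {m : ℕ} (α : Fin m) (f : (Fin m → ℝ) → ℝ) (t : Fin m → ℝ) : ℝ :=
  fderiv ℝ f t (Pi.single α 1)

/-- Componentwise inverse of a square array of reals (matrix inversion). -/
def minv {m : ℕ} (A : Fin m → Fin m → ℝ) : Fin m → Fin m → ℝ :=
  fun i j => (Matrix.of A)⁻¹ i j

/-- `√|det h(t)|`, the volume density of the metric `h`. -/
def sqrtDet {p : ℕ} (h : (Fin p → ℝ) → Fin p → Fin p → ℝ) (t : Fin p → ℝ) : ℝ :=
  Real.sqrt |(Matrix.of (h t)).det|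

/-- First jet `x^i_α = ∂x^i/∂t^α` of a map `x : ℝ^p → ℝ^n`. -/
def jet {p n : ℕ} (x : (Fin p → ℝ) → Fin n → ℝ) (t : Fin p → ℝ) :
    Fin n → Fin p → ℝ :=
  fun i α => pd α (fun s => x s i) t

/-- Christoffel symbols `G^i_{jk} = ½ g^{il}(∂g_{lj}/∂x^k + ∂g_{lk}/∂x^j − ∂g_{jk}/∂x^l)`. -/
def christoffel {m : ℕ} (g : (Fin m → ℝ) → Fin m → Fin m → ℝ)
    (i j k : Fin m) (q : Fin m → ℝ) : ℝ :=
  (1 / 2) * ∑ l, minv (g q) i l *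
    (pd k (fun y => g y l j) q + pd j (fun y => g y l k) q - pd l (fun y => g y j k) q)

/-- Covariant second jet
`x^i_{αβ} = ∂²x^i/∂t^α∂t^β − H^γ_{αβ} x^i_γ + G^i_{jk} x^j_α x^k_β`. -/
def covHess {p n : ℕ} (h : (Fin p → ℝ) → Fin p → Fin p → ℝ)
    (g : (Fin n → ℝ) → Fin n → Fin n → ℝ)
    (x : (Fin p → ℝ) → Fin n → ℝ) (i : Fin n) (α β : Fin p) (t : Fin p → ℝ) : ℝ :=
  pd α (fun s => jet x s i β) t
    - (∑ γ, christoffel h γ α β t * jet x t i γ)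
    + ∑ j, ∑ k, christoffel g i j k (x t) * jet x t j α * jet x t k β

/-- `∇_j X^i_α = ∂X^i_α/∂x^j + G^i_{jk} X^k_α`. -/
def nablaX {p n : ℕ} (g : (Fin n → ℝ) → Fin n → Fin n → ℝ)
    (X : Fin n → Fin p → (Fin p → ℝ) → (Fin n → ℝ) → ℝ)
    (j i : Fin n) (α : Fin p) (t : Fin p → ℝ) (q : Fin n → ℝ) : ℝ :=
  pd j (fun y => X i α t y) q + ∑ k, christoffel g i j k q * X k α t q

/-- `D_β X^i_α = ∂X^i_α/∂t^β − H^γ_{βα} X^i_γ`. -/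
def Dt {p n : ℕ} (h : (Fin p → ℝ) → Fin p → Fin p → ℝ)
    (X : Fin n → Fin p → (Fin p → ℝ) → (Fin n → ℝ) → ℝ)
    (β : Fin p) (i : Fin n) (α : Fin p) (t : Fin p → ℝ) (q : Fin n → ℝ) : ℝ :=
  pd β (fun s => X i α s q) t - ∑ γ, christoffel h γ β α t * X i γ t q

/-- External tensor `F_j{}^i{}_α = ∇_j X^i_α − g_{hj} g^{ik} ∇_k X^h_α`. -/
def Fext {p n : ℕ} (g : (Fin n → ℝ) → Fin n → Fin n → ℝ)
    (X : Fin n → Fin p → (Fin p → ℝ) → (Fin n → ℝ) → ℝ)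
    (j i : Fin n) (α : Fin p) (t : Fin p → ℝ) (q : Fin n → ℝ) : ℝ :=
  nablaX g X j i α t q
    - ∑ h', ∑ k, g q h' j * minv (g q) i k * nablaX g X k h' α t q

/-- Potential energy `f = ½ h^{αβ} g_{ij} X^i_α X^j_β`. -/
def potE {p n : ℕ} (h : (Fin p → ℝ) → Fin p → Fin p → ℝ)
    (g : (Fin n → ℝ) → Fin n → Fin n → ℝ)
    (X : Fin n → Fin p → (Fin p → ℝ) → (Fin n → ℝ) → ℝ)
    (t : Fin p → ℝ) (q : Fin n → ℝ) : ℝ :=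
  (1 / 2) * ∑ α, ∑ β, ∑ i, ∑ j, minv (h t) α β * g q i j * X i α t q * X j β t q

/-- A map `x` is an extremal of the first-order Lagrangian `L = L(t, x, x_·)` iff it
satisfies the Euler–Lagrange equations
`∂L/∂x^k − (d/dt^α)(∂L/∂x^k_α) = 0` along the first jet of `x`. -/
def IsExtremal {p n : ℕ}
    (L : (Fin p → ℝ) → (Fin n → ℝ) → (Fin n → Fin p → ℝ) → ℝ)
    (x : (Fin p → ℝ) → Fin n → ℝ) : Prop :=
  ∀ (t : Fin p → ℝ) (k : Fin n),
    fderiv ℝ (fun q => L t q (jet x t)) (x t) (Pi.single k 1)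
      - (∑ α, pd α
          (fun s => fderiv ℝ (fun v => L s (x s) v) (jet x s)
            (Pi.single k (Pi.single α 1))) t) = 0

section MatrixInverse

variable {m : ℕ} {A : Fin m → Fin m → ℝ}

theorem minv_comm_of_symm (hA : ∀ i j, A i j = A j i) (i j : Fin m) :
    minv A i j = minv A j i :=
  (show (Matrix.of A).IsSymm from Matrix.IsSymm.ext fun i j => hA j i).inv.apply j i

theorem sum_minv_mul_sum_mul (hA : (Matrix.of A).det ≠ 0) (v : Fin m → ℝ) (i : Fin m) :
    ∑ h, minv A h i * ∑ k, A k h * v k = v i := by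
  have hv : (Matrix.of A)⁻¹.transpose.mulVec ((Matrix.of A).transpose.mulVec v) = v := by
    rw [Matrix.mulVec_mulVec, ← Matrix.transpose_mul,
      Matrix.mul_nonsing_inv _ (isUnit_iff_ne_zero.2 hA), Matrix.transpose_one, Matrix.one_mulVec]
  exact congrFun hv i

theorem minv_eq_comp_ringInverse :
    (minv : (Fin m → Fin m → ℝ) → Fin m → Fin m → ℝ)
      = Matrix.of.symm ∘ Ring.inverse ∘ Matrix.of :=
  funext fun B => congrArg Matrix.of.symm (Matrix.nonsing_inv_eq_ringInverse (Matrix.of B))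

open scoped Matrix.Norms.Operator

theorem contDiffAt_minv {r : WithTop ℕ∞} (hA : (Matrix.of A).det ≠ 0) :
    ContDiffAt ℝ r minv A := by
  let e := (Matrix.ofLinearEquiv ℝ (m := Fin m) (n := Fin m) (α := ℝ)).toContinuousLinearEquiv
  have hunit : IsUnit (e A) := (Matrix.isUnit_iff_isUnit_det _).2 (isUnit_iff_ne_zero.2 hA)
  rw [minv_eq_comp_ringInverse]
  exact e.symm.contDiff.contDiffAt.comp A
    ((contDiffAt_ringInverse ℝ hunit.unit).comp A e.contDiff.contDiffAt)

theorem fderiv_minv_apply (hA : (Matrix.of A).det ≠ 0) (B : Fin m → Fin m → ℝ) (i j : Fin m) :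
    fderiv ℝ minv A B i j = -((Matrix.of A)⁻¹ * Matrix.of B * (Matrix.of A)⁻¹) i j := by
  let e := (Matrix.ofLinearEquiv ℝ (m := Fin m) (n := Fin m) (α := ℝ)).toContinuousLinearEquiv
  have hunit : IsUnit (e A) := (Matrix.isUnit_iff_isUnit_det _).2 (isUnit_iff_ne_zero.2 hA)
  have hderiv := e.symm.hasFDerivAt.comp A
    ((hasFDerivAt_ringInverse (𝕜 := ℝ) hunit.unit).comp A e.hasFDerivAt)
  have hinv : (↑hunit.unit⁻¹ : Matrix (Fin m) (Fin m) ℝ) = (Matrix.of A)⁻¹ :=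
    Matrix.coe_units_inv hunit.unit
  rw [minv_eq_comp_ringInverse]
  rw [hinv] at hderiv
  exact congrArg (fun C => C B i j) hderiv.fderiv

end MatrixInverse

section PartialDerivative

variable {m : ℕ} {t : Fin m → ℝ}

theorem pd_mul {f f' : (Fin m → ℝ) → ℝ} (α : Fin m)
    (hf : DifferentiableAt ℝ f t) (hf' : DifferentiableAt ℝ f' t) :
    pd α (fun s => f s * f' s) t = pd α f t * f' t + f t * pd α f' t := by
  simp only [pd, fderiv_fun_mul hf hf', add_apply, smul_apply, smul_eq_mul]
  ring

theorem pd_sum {ι : Type*} [Fintype ι] {f : ι → (Fin m → ℝ) → ℝ} (α : Fin m)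
    (hf : ∀ i, DifferentiableAt ℝ (f i) t) :
    pd α (fun s => ∑ i, f i s) t = ∑ i, pd α (f i) t := by
  simp only [pd, fderiv_fun_sum fun i _ => hf i, FunLike.coe_sum, Finset.sum_apply]

theorem contDiff_pd {r : WithTop ℕ∞} {f : (Fin m → ℝ) → ℝ} (hf : ContDiff ℝ (r + 1) f)
    (α : Fin m) : ContDiff ℝ r (pd α f) :=
  (hf.fderiv_right le_rfl).clm_apply contDiff_const

theorem pd_apply_apply {ι κ : Type*} [Finite ι] [Finite κ] {F : (Fin m → ℝ) → ι → κ → ℝ}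
    (hF : DifferentiableAt ℝ F t) (γ : Fin m) (i : ι) (j : κ) :
    pd γ (fun s => F s i j) t = fderiv ℝ F t (Pi.single γ 1) i j := by
  have := Fintype.ofFinite ι
  have := Fintype.ofFinite κ
  simp only [pd, fderiv_apply (differentiableAt_pi.1 hF i) j, fderiv_apply hF i,
    ContinuousLinearMap.comp_apply, ContinuousLinearMap.proj_apply]

variable {A : (Fin m → ℝ) → Fin m → Fin m → ℝ}

theorem differentiableAt_minv_comp (hA : ∀ i j, DifferentiableAt ℝ (fun s => A s i j) t)
    (hdet : (Matrix.of (A t)).det ≠ 0) : DifferentiableAt ℝ (fun s => minv (A s)) t :=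
  ((contDiffAt_minv (r := 1) hdet).differentiableAt one_ne_zero).fun_comp' t
    (differentiableAt_pi.2 fun i => differentiableAt_pi.2 fun j => hA i j)

theorem pd_minv (hA : ∀ i j, DifferentiableAt ℝ (fun s => A s i j) t)
    (hdet : (Matrix.of (A t)).det ≠ 0) (γ i j : Fin m) :
    pd γ (fun s => minv (A s) i j) t
      = -((Matrix.of (A t))⁻¹ * (Matrix.of fun k l => pd γ (fun s => A s k l) t)
          * (Matrix.of (A t))⁻¹) i j := by
  have hA' : DifferentiableAt ℝ A t :=
    differentiableAt_pi.2 fun i => differentiableAt_pi.2 fun j => hA i j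
  have hminv : DifferentiableAt ℝ minv (A t) :=
    (contDiffAt_minv (r := 1) hdet).differentiableAt one_ne_zero
  have hpd : (fun k l => pd γ (fun s => A s k l) t) = fderiv ℝ A t (Pi.single γ 1) :=
    funext₂ fun k l => pd_apply_apply hA' γ k l
  rw [pd_apply_apply (differentiableAt_minv_comp hA hdet), fderiv_fun_comp t hminv hA', hpd]
  exact fderiv_minv_apply hdet _ i j

end PartialDerivative

section LeviCivita

variable {p : ℕ} {h : (Fin p → ℝ) → Fin p → Fin p → ℝ} {t : Fin p → ℝ}

/-- The connection matrix `(Γ_γ)^α_β = H^α_{γβ}` of the Levi-Civita connection of `h`: the row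
index is the upper index of the Christoffel symbol, the column index its last lower one. -/
def connectionMatrix (h : (Fin p → ℝ) → Fin p → Fin p → ℝ) (γ : Fin p) (t : Fin p → ℝ) :
    Matrix (Fin p) (Fin p) ℝ :=
  Matrix.of fun α β => christoffel h α γ β t

theorem mul_connectionMatrix_apply (hdet : (Matrix.of (h t)).det ≠ 0) (γ α β : Fin p) :
    (Matrix.of (h t) * connectionMatrix h γ t) α β
      = 1 / 2 * (pd β (fun s => h s α γ) t + pd γ (fun s => h s α β) t
          - pd α (fun s => h s γ β) t) := by
  let C : Matrix (Fin p) (Fin p) ℝ := Matrix.of fun α β =>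
    pd β (fun s => h s α γ) t + pd γ (fun s => h s α β) t - pd α (fun s => h s γ β) t
  have hΓ : connectionMatrix h γ t = (1 / 2 : ℝ) • ((Matrix.of (h t))⁻¹ * C) := rfl
  rw [hΓ, Matrix.mul_smul,
    Matrix.mul_nonsing_inv_cancel_left _ _ (isUnit_iff_ne_zero.2 hdet)]
  rfl

theorem pd_metric_eq (hsymm : ∀ t α β, h t α β = h t β α) (hdet : (Matrix.of (h t)).det ≠ 0)
    (γ : Fin p) :
    (Matrix.of fun α β => pd γ (fun s => h s α β) t)
      = Matrix.of (h t) * connectionMatrix h γ t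
        + (connectionMatrix h γ t).transpose * Matrix.of (h t) := by
  have hpd : ∀ γ α β, pd γ (fun s => h s α β) t = pd γ (fun s => h s β α) t := fun γ α β => by
    simp only [hsymm _ α β]
  have hT : (Matrix.of (h t)).transpose = Matrix.of (h t) := Matrix.ext fun α β => hsymm t β α
  ext α β
  have hmul : ((connectionMatrix h γ t).transpose * Matrix.of (h t)) α β
      = (Matrix.of (h t) * connectionMatrix h γ t) β α := by
    rw [← Matrix.transpose_apply (Matrix.of (h t) * connectionMatrix h γ t), Matrix.transpose_mul,
      hT]
  rw [Matrix.add_apply, hmul, mul_connectionMatrix_apply hdet, mul_connectionMatrix_apply hdet,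
    Matrix.of_apply, hpd α γ β, hpd β γ α, hpd γ β α]
  ring

theorem pd_minv_metric (hsymm : ∀ t α β, h t α β = h t β α)
    (hdiff : ∀ α β, DifferentiableAt ℝ (fun s => h s α β) t) (hdet : (Matrix.of (h t)).det ≠ 0)
    (γ α β : Fin p) :
    pd γ (fun s => minv (h s) α β) t
      = -(∑ l, christoffel h α γ l t * minv (h t) l β)
        - ∑ l, minv (h t) α l * christoffel h β γ l t := by
  have hmat : (Matrix.of (h t))⁻¹ * (Matrix.of (h t) * connectionMatrix h γ t
        + (connectionMatrix h γ t).transpose * Matrix.of (h t)) * (Matrix.of (h t))⁻¹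
      = connectionMatrix h γ t * (Matrix.of (h t))⁻¹
        + (Matrix.of (h t))⁻¹ * (connectionMatrix h γ t).transpose := by
    have hunit := isUnit_iff_ne_zero.2 hdet
    rw [Matrix.mul_add, Matrix.add_mul, Matrix.nonsing_inv_mul_cancel_left _ _ hunit,
      ← Matrix.mul_assoc, Matrix.mul_nonsing_inv_cancel_right _ _ hunit]
  rw [pd_minv hdiff hdet, pd_metric_eq hsymm hdet, hmat, neg_eq_iff_eq_neg, neg_sub_left, neg_neg,
    add_comm]
  rfl

theorem sum_pd_minv_metric (hsymm : ∀ t α β, h t α β = h t β α)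
    (hdiff : ∀ α β, DifferentiableAt ℝ (fun s => h s α β) t) (hdet : (Matrix.of (h t)).det ≠ 0)
    (β : Fin p) :
    ∑ α, pd α (fun s => minv (h s) α β) t
      = -(∑ α, ∑ l, christoffel h α α l t * minv (h t) l β)
        - ∑ α, ∑ l, minv (h t) α l * christoffel h β α l t := by
  simp only [pd_minv_metric hsymm hdiff hdet, Finset.sum_sub_distrib, Finset.sum_neg_distrib]

end LeviCivita

section Momentum

variable {p n : ℕ} {h : (Fin p → ℝ) → Fin p → Fin p → ℝ} {x : (Fin p → ℝ) → Fin n → ℝ}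

/-- The canonical momenta `u^{αi} = h^{αβ} x^i_β` of a map `x`. -/
def momentum (h : (Fin p → ℝ) → Fin p → Fin p → ℝ) (x : (Fin p → ℝ) → Fin n → ℝ)
    (α : Fin p) (i : Fin n) (t : Fin p → ℝ) : ℝ :=
  ∑ β, minv (h t) α β * jet x t i β

/-- The covariant divergence `∂u^{αi}/∂t^α + H^α_{αλ} u^{λi} + G^i_{jk} u^{αj} ∂x^k/∂t^α` of a
field of momenta `u` along the map `x`. -/
def covDiv (h : (Fin p → ℝ) → Fin p → Fin p → ℝ) (g : (Fin n → ℝ) → Fin n → Fin n → ℝ)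
    (x : (Fin p → ℝ) → Fin n → ℝ) (u : Fin p → Fin n → (Fin p → ℝ) → ℝ)
    (t : Fin p → ℝ) (i : Fin n) : ℝ :=
  (∑ α, pd α (u α i) t)
    + (∑ α, ∑ l, christoffel h α α l t * u l i t)
    + (∑ α, ∑ j, ∑ k, christoffel g i j k (x t) * u α j t * jet x t k α)

theorem contDiff_jet {r : WithTop ℕ∞} (hx : ContDiff ℝ (r + 1) x) (i : Fin n) (α : Fin p) :
    ContDiff ℝ r fun t => jet x t i α :=
  contDiff_pd (contDiff_pi.1 hx i) α

theorem contDiff_momentum {r : WithTop ℕ∞} (hh : ∀ α β, ContDiff ℝ r fun t => h t α β)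
    (hdet : ∀ t, (Matrix.of (h t)).det ≠ 0) (hx : ContDiff ℝ (r + 1) x) (α : Fin p) (i : Fin n) :
    ContDiff ℝ r (momentum h x α i) := by
  have hpi : ContDiff ℝ r h := contDiff_pi.2 fun α => contDiff_pi.2 fun β => hh α β
  have hminv : ContDiff ℝ r fun t => minv (h t) := contDiff_iff_contDiffAt.2 fun t =>
    (contDiffAt_minv (hdet t)).comp t hpi.contDiffAt
  exact ContDiff.sum fun β _ =>
    (contDiff_pi.1 (contDiff_pi.1 hminv α) β).mul (contDiff_jet hx i β)

variable {t : Fin p → ℝ}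

theorem sum_pd_momentum (hsymm : ∀ t α β, h t α β = h t β α)
    (hdiff : ∀ α β, DifferentiableAt ℝ (fun s => h s α β) t) (hdet : (Matrix.of (h t)).det ≠ 0)
    {i : Fin n} (hjet : ∀ β, DifferentiableAt ℝ (fun s => jet x s i β) t) :
    ∑ α, pd α (momentum h x α i) t
      = ∑ α, ∑ β, minv (h t) α β
          * (pd α (fun s => jet x s i β) t - ∑ γ, christoffel h γ α β t * jet x t i γ)
        - ∑ α, ∑ l, christoffel h α α l t * momentum h x l i t := by
  have hminv : ∀ α β, DifferentiableAt ℝ (fun s => minv (h s) α β) t := fun α =>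
    differentiableAt_pi.1 (differentiableAt_pi.1 (differentiableAt_minv_comp hdiff hdet) α)
  have hleibniz : ∀ α, pd α (momentum h x α i) t
      = ∑ β, pd α (fun s => minv (h s) α β) t * jet x t i β
        + ∑ β, minv (h t) α β * pd α (fun s => jet x s i β) t := fun α => by
    rw [← Finset.sum_add_distrib, show momentum h x α i =
      fun s => ∑ β, minv (h s) α β * jet x s i β from rfl,
      pd_sum α fun β => (hminv α β).fun_mul (hjet β)]
    exact Finset.sum_congr rfl fun β _ => pd_mul α (hminv α β) (hjet β)
  have hdiv : ∑ α, ∑ β, pd α (fun s => minv (h s) α β) t * jet x t i β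
      = -(∑ α, ∑ l, christoffel h α α l t * momentum h x l i t)
        - ∑ α, ∑ β, minv (h t) α β * ∑ γ, christoffel h γ α β t * jet x t i γ := by
    rw [Finset.sum_comm]
    simp only [← Finset.sum_mul, sum_pd_minv_metric hsymm hdiff hdet, sub_mul, neg_mul,
      Finset.sum_sub_distrib, Finset.sum_neg_distrib, momentum]
    simp only [Finset.sum_mul, Finset.mul_sum, mul_assoc]
    exact congrArg₂ _ (congrArg _ Finset.sum_comm_cycle.symm) Finset.sum_comm_cycle.symm
  simp only [hleibniz, Finset.sum_add_distrib, hdiv, mul_sub, Finset.sum_sub_distrib]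
  ring

theorem sum_christoffel_mul_momentum_mul_jet (hsymm : ∀ t α β, h t α β = h t β α)
    (Γ : Fin n → Fin n → ℝ) :
    ∑ α, ∑ j, ∑ k, Γ j k * momentum h x α j t * jet x t k α
      = ∑ α, ∑ β, minv (h t) α β * ∑ j, ∑ k, Γ j k * jet x t j α * jet x t k β := by
  calc _ = ∑ α, ∑ β, minv (h t) α β * ∑ j, ∑ k, Γ j k * jet x t j β * jet x t k α := by
        refine Finset.sum_congr rfl fun α _ => ?_
        simp only [momentum, Finset.mul_sum, Finset.sum_mul, mul_assoc, mul_left_comm (Γ _ _)]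
        exact Finset.sum_comm_cycle
    _ = _ := by
        rw [Finset.sum_comm]
        simp only [minv_comm_of_symm (hsymm t)]

theorem covDiv_momentum (hsymm : ∀ t α β, h t α β = h t β α)
    (hdiff : ∀ α β, DifferentiableAt ℝ (fun s => h s α β) t) (hdet : (Matrix.of (h t)).det ≠ 0)
    (g : (Fin n → ℝ) → Fin n → Fin n → ℝ) {i : Fin n}
    (hjet : ∀ β, DifferentiableAt ℝ (fun s => jet x s i β) t) :
    covDiv h g x (momentum h x) t i = ∑ α, ∑ β, minv (h t) α β * covHess h g x i α β t := by
  simp only [covDiv, covHess, sum_pd_momentum hsymm hdiff hdet hjet, sub_add_cancel,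
    sum_christoffel_mul_momentum_mul_jet hsymm, ← Finset.sum_add_distrib, ← mul_add]

end Momentum

section HamiltonPoisson

variable {p n : ℕ} {h : (Fin p → ℝ) → Fin p → Fin p → ℝ}
  {g : (Fin n → ℝ) → Fin n → Fin n → ℝ}
  {X : Fin n → Fin p → (Fin p → ℝ) → (Fin n → ℝ) → ℝ}
  {x : (Fin p → ℝ) → Fin n → ℝ} {t : Fin p → ℝ} {i : Fin n}

/-- The tensor `ω_{jhα} = ½ g_{kh} F_j{}^k{}_α`, obtained from `Fext` by lowering an index. -/
def omegaExt (g : (Fin n → ℝ) → Fin n → Fin n → ℝ)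
    (X : Fin n → Fin p → (Fin p → ℝ) → (Fin n → ℝ) → ℝ)
    (j h : Fin n) (α : Fin p) (t : Fin p → ℝ) (q : Fin n → ℝ) : ℝ :=
  (1 / 2) * ∑ k, g q k h * Fext g X j k α t q

/-- The `i`-th equation of the generalized Poisson system for `x`, at the point `t`. -/
def PoissonEquation (h : (Fin p → ℝ) → Fin p → Fin p → ℝ)
    (g : (Fin n → ℝ) → Fin n → Fin n → ℝ)
    (X : Fin n → Fin p → (Fin p → ℝ) → (Fin n → ℝ) → ℝ)
    (x : (Fin p → ℝ) → Fin n → ℝ) (t : Fin p → ℝ) (i : Fin n) : Prop :=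
  ∑ α, ∑ β, minv (h t) α β * covHess h g x i α β t
    = (∑ h', ∑ α, ∑ β, ∑ k, ∑ j, minv (g (x t)) i h' * minv (h t) α β
        * g (x t) k j * nablaX g X h' k α t (x t) * X j β t (x t))
      + (∑ α, ∑ β, ∑ j, minv (h t) α β * Fext g X j i α t (x t) * jet x t j β)
      + (∑ α, ∑ β, minv (h t) α β * Dt h X β i α t (x t))

/-- The `i`-th divergence equation of the covariant Hamilton system for `x` with momenta `u`, at
the point `t`. The defining relation `u = momentum h x` is not part of it. -/
def HamiltonEquation (h : (Fin p → ℝ) → Fin p → Fin p → ℝ)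
    (g : (Fin n → ℝ) → Fin n → Fin n → ℝ)
    (X : Fin n → Fin p → (Fin p → ℝ) → (Fin n → ℝ) → ℝ)
    (x : (Fin p → ℝ) → Fin n → ℝ) (u : Fin p → Fin n → (Fin p → ℝ) → ℝ)
    (t : Fin p → ℝ) (i : Fin n) : Prop :=
  covDiv h g x u t i
    = (∑ h', ∑ α, ∑ β, ∑ j, ∑ k, minv (g (x t)) i h' * minv (h t) α β
        * g (x t) j k * X j β t (x t) * nablaX g X h' k α t (x t))
      + 2 * (∑ h', ∑ α, ∑ j, minv (g (x t)) h' i * omegaExt g X j h' α t (x t) * u α j t)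
      + (∑ α, ∑ β, minv (h t) α β * Dt h X β i α t (x t))

theorem two_mul_sum_minv_mul_omegaExt {q : Fin n → ℝ} (gdet : (Matrix.of (g q)).det ≠ 0)
    (j : Fin n) (α : Fin p) :
    2 * ∑ h', minv (g q) h' i * omegaExt g X j h' α t q = Fext g X j i α t q := by
  rw [← sum_minv_mul_sum_mul gdet (fun k => Fext g X j k α t q) i, Finset.mul_sum]
  refine Finset.sum_congr rfl fun h' _ => ?_
  rw [omegaExt]
  ring

theorem two_mul_sum_minv_mul_omegaExt_mul_momentum (gdet : (Matrix.of (g (x t))).det ≠ 0) :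
    2 * (∑ h', ∑ α, ∑ j,
        minv (g (x t)) h' i * omegaExt g X j h' α t (x t) * momentum h x α j t)
      = ∑ α, ∑ β, ∑ j, minv (h t) α β * Fext g X j i α t (x t) * jet x t j β := by
  calc _ = ∑ α, ∑ j, (2 * ∑ h', minv (g (x t)) h' i * omegaExt g X j h' α t (x t))
          * momentum h x α j t := by
        simp only [Finset.mul_sum, Finset.sum_mul, mul_assoc]
        exact Finset.sum_comm_cycle.symm
    _ = ∑ α, ∑ j, ∑ β, minv (h t) α β * Fext g X j i α t (x t) * jet x t j β := by
        simp only [two_mul_sum_minv_mul_omegaExt gdet, momentum, Finset.mul_sum, mul_assoc,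
          mul_left_comm (Fext _ _ _ _ _ _ _)]
    _ = _ := Finset.sum_congr rfl fun α _ => Finset.sum_comm

theorem hamiltonEquation_momentum_iff (hsymm : ∀ t α β, h t α β = h t β α)
    (hdiff : ∀ α β, DifferentiableAt ℝ (fun s => h s α β) t) (hdet : (Matrix.of (h t)).det ≠ 0)
    (gsymm : ∀ i j, g (x t) i j = g (x t) j i) (gdet : (Matrix.of (g (x t))).det ≠ 0)
    (hjet : ∀ β, DifferentiableAt ℝ (fun s => jet x s i β) t) :
    HamiltonEquation h g X x (momentum h x) t i ↔ PoissonEquation h g X x t i := by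
  have hpotential : (∑ h', ∑ α, ∑ β, ∑ j, ∑ k, minv (g (x t)) i h' * minv (h t) α β
        * g (x t) j k * X j β t (x t) * nablaX g X h' k α t (x t))
      = ∑ h', ∑ α, ∑ β, ∑ k, ∑ j, minv (g (x t)) i h' * minv (h t) α β
        * g (x t) k j * nablaX g X h' k α t (x t) * X j β t (x t) := by
    refine Finset.sum_congr rfl fun h' _ => Finset.sum_congr rfl fun α _ =>
      Finset.sum_congr rfl fun β _ => Finset.sum_comm.trans ?_
    simp only [gsymm, mul_right_comm _ (X _ _ _ _)]
  rw [HamiltonEquation, PoissonEquation, covDiv_momentum hsymm hdiff hdet g hjet, hpotential,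
    two_mul_sum_minv_mul_omegaExt_mul_momentum gdet]

theorem covariant_hamilton_general_case_general {r : WithTop ℕ∞} (hr : r ≠ 0)
    (hsymm : ∀ t α β, h t α β = h t β α)
    (hsmooth : ∀ α β, ContDiff ℝ r fun t => h t α β)
    (hdet : ∀ t, (Matrix.of (h t)).det ≠ 0)
    (gsymm : ∀ q i j, g q i j = g q j i)
    (_gdiff : ∀ i j, Differentiable ℝ fun q => g q i j)
    (gdet : ∀ q, (Matrix.of (g q)).det ≠ 0)
    (_Xdiff : ∀ i α, Differentiable ℝ fun z : (Fin p → ℝ) × (Fin n → ℝ) => X i α z.1 z.2)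
    (hx : ContDiff ℝ (r + 1) x) :
    (∀ t i, PoissonEquation h g X x t i)
      ↔ ∃ u : Fin p → Fin n → (Fin p → ℝ) → ℝ,
          (∀ α i, ContDiff ℝ r (u α i))
          ∧ (∀ t α i, u α i t = momentum h x α i t)
          ∧ ∀ t i, HamiltonEquation h g X x u t i := by
  have hiff (t : Fin p → ℝ) (i : Fin n) :
      HamiltonEquation h g X x (momentum h x) t i ↔ PoissonEquation h g X x t i :=
    hamiltonEquation_momentum_iff hsymm (fun α β => (hsmooth α β).differentiable hr t) (hdet t)
      (gsymm (x t)) (gdet (x t)) fun β => (contDiff_jet hx i β).differentiable hr t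
  constructor
  · intro hPoisson
    exact ⟨momentum h x, contDiff_momentum hsmooth hdet hx, fun _ _ _ => rfl,
      fun t i => (hiff t i).2 (hPoisson t i)⟩
  · rintro ⟨u, -, hu, hHamilton⟩ t i
    obtain rfl : u = momentum h x := funext₃ fun α i t => hu t α i
    exact (hiff t i).1 (hHamilton t i)

end HamiltonPoisson

/-- STATEMENT 13 (covariant Hamilton equations, general case), with
`ω_{jhα} = ½ g_{kh} F_j{}^k{}_α`. -/
theorem covariant_hamilton_general_case
    {p n : ℕ} (hp : 0 < p) (hn : 0 < n)
    (h : (Fin p → ℝ) → Fin p → Fin p → ℝ)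
    (hsymm : ∀ t α β, h t α β = h t β α)
    (hsmooth : ∀ α β, ContDiff ℝ (⊤ : ℕ∞) fun t => h t α β)
    (hdet : ∀ t, (Matrix.of (h t)).det ≠ 0)
    (g : (Fin n → ℝ) → Fin n → Fin n → ℝ)
    (gsymm : ∀ q i j, g q i j = g q j i)
    (gsmooth : ∀ i j, ContDiff ℝ (⊤ : ℕ∞) fun q => g q i j)
    (gdet : ∀ q, (Matrix.of (g q)).det ≠ 0)
    (X : Fin n → Fin p → (Fin p → ℝ) → (Fin n → ℝ) → ℝ)
    (Xsmooth : ∀ i α, ContDiff ℝ (⊤ : ℕ∞) fun z : (Fin p → ℝ) × (Fin n → ℝ) => X i α z.1 z.2)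
    (x : (Fin p → ℝ) → Fin n → ℝ) (hx : ContDiff ℝ (⊤ : ℕ∞) x) :
    (∀ (t : Fin p → ℝ) (i : Fin n),
        ∑ α, ∑ β, minv (h t) α β * covHess h g x i α β t
          = (∑ h', ∑ α, ∑ β, ∑ k, ∑ j, minv (g (x t)) i h' * minv (h t) α β
              * g (x t) k j * nablaX g X h' k α t (x t) * X j β t (x t))
            + (∑ α, ∑ β, ∑ j, minv (h t) α β * Fext g X j i α t (x t) * jet x t j β)
            + (∑ α, ∑ β, minv (h t) α β * Dt h X β i α t (x t)))
      ↔ ∃ u : Fin p → Fin n → (Fin p → ℝ) → ℝ,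
          (∀ (α : Fin p) (i : Fin n), ContDiff ℝ (⊤ : ℕ∞) (u α i))
          ∧ (∀ (t : Fin p → ℝ) (α : Fin p) (i : Fin n),
              u α i t = ∑ β, minv (h t) α β * jet x t i β)
          ∧ (∀ (t : Fin p → ℝ) (i : Fin n),
              (∑ α, pd α (u α i) t)
                + (∑ α, ∑ l, christoffel h α α l t * u l i t)
                + (∑ α, ∑ j, ∑ k, christoffel g i j k (x t) * u α j t * jet x t k α)
              = (∑ h', ∑ α, ∑ β, ∑ j, ∑ k, minv (g (x t)) i h' * minv (h t) α β
                  * g (x t) j k * X j β t (x t) * nablaX g X h' k α t (x t))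
                + 2 * (∑ h', ∑ α, ∑ j, minv (g (x t)) h' i
                    * ((1 / 2) * ∑ k, g (x t) k h' * Fext g X j k α t (x t))
                    * u α j t)
                + (∑ α, ∑ β, minv (h t) α β * Dt h X β i α t (x t))) :=
  covariant_hamilton_general_case_general (by simp) hsymm hsmooth hdet gsymm
    (fun i j => (gsmooth i j).differentiable (by simp)) gdet
    (fun i α => (Xsmooth i α).differentiable (by simp)) hx
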